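/- arXiv:1908.03939 — 2 statements merged into one kernel-verified Lean document; each statement's English description precedes it below -/
import Mathlib

section
/- Let R = k[x_0,...,x_n] with n ≥ 2, and let I_1, I_2 be homogeneous ideals of height 2 such that R/I_1 and R/I_2 are Cohen-Macaulay. Suppose F_1 ∈ I_1, F_2 ∈ I_2 are homogeneous and form a regular sequence. Then I := F_2 I_1 + F_1 I_2 has height 2 and R/I is Cohen-Macaulay. -/
open MvPolynomial

/-- The height of an ideal: the infimum of the heights of the primes containing it. -/
noncomputable def idealHeight {R : Type*} [CommRing R] (I : Ideal R) : ℕ∞ :=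
  ⨅ p : {p : PrimeSpectrum R // I ≤ p.asIdeal}, Order.height p.1

/-- For a homogeneous ideal `I` of height `c` in `k[x₀,…,xₙ]`, Cohen-Macaulayness of
`R/I` expressed via the existence of a regular sequence of length `(n+1) - c` in the
irrelevant maximal ideal acting on `R/I`. -/
def quotientIsCM (k : Type*) [Field k] (n : ℕ)
    (I : Ideal (MvPolynomial (Fin (n + 1)) k)) (c : ℕ) : Prop :=
  ∃ rs : List (MvPolynomial (Fin (n + 1)) k), rs.length = (n + 1) - c ∧
    (∀ r ∈ rs, r ∈ Ideal.span (Set.range X)) ∧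
    RingTheory.Sequence.IsRegular (MvPolynomial (Fin (n + 1)) k ⧸ I) rs

universe u

section ext
open CategoryTheory Abelian

variable {R : Type u} [CommRing R] (N : ModuleCat.{u} R) {A B C : Type u} [AddCommGroup A]
  [AddCommGroup B] [AddCommGroup C] [Module R A] [Module R B] [Module R C]

/-- The short exact sequence of modules attached to exact linear maps. -/
lemma la_ses (f : A →ₗ[R] B) (g : B →ₗ[R] C)
    (hf : Function.Injective f) (hg : Function.Surjective g) (hfg : Function.Exact f g) :
    (ModuleCat.shortComplexOfCompEqZero f g hfg.linearMap_comp_eq_zero).ShortExact where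
  exact := ModuleCat.shortComplex_exact _ hfg
  mono_f := (ModuleCat.mono_iff_injective _).2 hf
  epi_g := (ModuleCat.epi_iff_surjective _).2 hg

lemma la_ext_mid (f : A →ₗ[R] B) (g : B →ₗ[R] C)
    (hf : Function.Injective f) (hg : Function.Surjective g) (hfg : Function.Exact f g) (i : ℕ)
    (h1 : Subsingleton (Ext N (ModuleCat.of R A) i))
    (h3 : Subsingleton (Ext N (ModuleCat.of R C) i)) :
    Subsingleton (Ext N (ModuleCat.of R B) i) := by
  refine subsingleton_of_forall_eq 0 fun x => ?_
  obtain ⟨y, rfl⟩ := Ext.covariant_sequence_exact₂ N (la_ses f g hf hg hfg) x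
    (h3.elim _ _)
  have : y = 0 := h1.elim _ _
  rw [this, Ext.zero_comp]

lemma la_ext_right (f : A →ₗ[R] B) (g : B →ₗ[R] C)
    (hf : Function.Injective f) (hg : Function.Surjective g) (hfg : Function.Exact f g) (i : ℕ)
    (h2 : Subsingleton (Ext N (ModuleCat.of R B) i))
    (h1 : Subsingleton (Ext N (ModuleCat.of R A) (i + 1))) :
    Subsingleton (Ext N (ModuleCat.of R C) i) := by
  refine subsingleton_of_forall_eq 0 fun x => ?_
  obtain ⟨y, rfl⟩ := Ext.covariant_sequence_exact₃ N (la_ses f g hf hg hfg) x rfl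
    (h1.elim _ _)
  have : y = 0 := h2.elim _ _
  rw [this, Ext.zero_comp]

lemma la_ext_left (f : A →ₗ[R] B) (g : B →ₗ[R] C)
    (hf : Function.Injective f) (hg : Function.Surjective g) (hfg : Function.Exact f g) (i : ℕ)
    (h2 : Subsingleton (Ext N (ModuleCat.of R B) i))
    (h3 : ∀ j, j + 1 = i → Subsingleton (Ext N (ModuleCat.of R C) j)) :
    Subsingleton (Ext N (ModuleCat.of R A) i) := by
  refine subsingleton_of_forall_eq 0 fun x => ?_
  cases i with
  | zero =>
    have := (la_ses f g hf hg hfg).mono_f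
    exact Ext.postcomp_mk₀_injective_of_mono N
      (ModuleCat.shortComplexOfCompEqZero f g hfg.linearMap_comp_eq_zero).f (h2.elim _ _)
  | succ j =>
    obtain ⟨y, rfl⟩ := Ext.covariant_sequence_exact₁ N (la_ses f g hf hg hfg) x
      (h2.elim _ _) rfl
    have : y = 0 := (h3 j rfl).elim _ _
    rw [this, Ext.zero_comp]

end ext

section alg

lemma la_reg {R : Type*} [CommRing R] [IsDomain R] {F₁ F₂ : R}
    (hreg : RingTheory.Sequence.IsRegular R [F₁, F₂]) :
    F₁ ≠ 0 ∧ ∀ a, F₁ ∣ F₂ * a → F₁ ∣ a := by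
  have h := hreg.toIsWeaklyRegular.regular_mod_prev
  have h0 := h 0 (by simp)
  have h1 := h 1 (by simp)
  rw [isSMulRegular_quotient_iff_mem_of_smul_mem] at h0 h1
  simp only [List.take_zero, List.getElem_cons_zero, List.take_succ_cons, List.getElem_cons_succ,
    Ideal.ofList_nil, Ideal.bot_mul, Ideal.ofList_singleton,
    Submodule.bot_smul, Submodule.mem_bot, smul_eq_mul, Ideal.mul_top,
    Ideal.mem_span_singleton] at h0 h1
  refine ⟨fun hF => ?_, h1⟩
  have := h0 1 (by simp [hF])
  simp at this

lemma la_ker {R : Type*} [CommRing R] [IsDomain R] {F₁ F₂ : R} (h0 : F₁ ≠ 0)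
    (h : ∀ a, F₁ ∣ F₂ * a → F₁ ∣ a) (a b : R) (hab : F₂ * a + F₁ * b = 0) :
    ∃ c, a = F₁ * c ∧ b = -(F₂ * c) := by
  obtain ⟨c, rfl⟩ := h a ⟨-b, by linear_combination hab⟩
  exact ⟨c, rfl, mul_left_cancel₀ h0 (by linear_combination hab)⟩

lemma la_height_prime {R : Type*} [CommRing R] [IsDomain R] {F₁ F₂ : R} (h0 : F₁ ≠ 0)
    (h : ∀ a, F₁ ∣ F₂ * a → F₁ ∣ a) (p : PrimeSpectrum R) (h1 : F₁ ∈ p.asIdeal)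
    (h2 : F₂ ∈ p.asIdeal) : 2 ≤ Order.height p := by
  obtain ⟨q, hq, hqp⟩ := Ideal.exists_minimalPrimes_le
    ((Ideal.span_singleton_le_iff_mem p.asIdeal).2 h1)
  have hqP : q.IsPrime := hq.1.1
  have hF2 : F₂ ∉ q := by
    have hr : IsSMulRegular (R ⧸ Ideal.span {F₁}) F₂ := by
      rw [isSMulRegular_quotient_iff_mem_of_smul_mem]
      simpa [Ideal.mem_span_singleton] using h
    apply hr.notMem_of_mem_minimalPrimes
    rwa [Ideal.annihilator_quotient]
  have hlt : q < p.asIdeal := lt_of_le_of_ne hqp fun e => hF2 (e ▸ h2)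
  have hF1 : F₁ ∈ q := hq.1.2 (Ideal.mem_span_singleton_self _)
  have hlt' : (⊥ : Ideal R) < q := bot_lt_iff_ne_bot.2 fun e => h0 (by simpa [e] using hF1)
  have e1 := Ideal.height_add_one_le_of_lt_of_isPrime hlt
  have e2 := Ideal.height_add_one_le_of_lt_of_isPrime hlt'
  rw [← PrimeSpectrum.height_eq_orderHeight]
  calc (2 : ℕ∞) = 0 + 1 + 1 := by norm_num
    _ ≤ (⊥ : Ideal R).height + 1 + 1 := by gcongr; exact zero_le
    _ ≤ q.height + 1 := by gcongr
    _ ≤ _ := e1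

lemma la_height {R : Type*} [CommRing R] [IsDomain R] {F₁ F₂ : R} {I₁ I₂ : Ideal R} (h0 : F₁ ≠ 0)
    (h : ∀ a, F₁ ∣ F₂ * a → F₁ ∣ a) (h1 : F₁ ∈ I₁)
    (hht1 : idealHeight I₁ = 2) (hht2 : idealHeight I₂ = 2) :
    idealHeight (Ideal.span {F₂} * I₁ + Ideal.span {F₁} * I₂) = 2 := by
  have hle : Ideal.span {F₂} * I₁ + Ideal.span {F₁} * I₂ ≤ I₁ :=
    sup_le Ideal.mul_le_right
      (Ideal.mul_le_left.trans ((Ideal.span_singleton_le_iff_mem _).2 h1))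
  apply le_antisymm
  · rw [← hht1]
    exact le_iInf fun p => iInf_le_of_le ⟨p.1, hle.trans p.2⟩ le_rfl
  · refine le_iInf fun p => ?_
    obtain ⟨p, hp⟩ := p
    have ha : F₂ ∈ p.asIdeal ∨ I₁ ≤ p.asIdeal := by
      have := p.2.mul_le.1 (le_sup_left.trans hp)
      rwa [Ideal.span_singleton_le_iff_mem] at this
    have hb : F₁ ∈ p.asIdeal ∨ I₂ ≤ p.asIdeal := by
      have := p.2.mul_le.1 (le_sup_right.trans hp)
      rwa [Ideal.span_singleton_le_iff_mem] at this
    rcases ha with ha | ha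
    · rcases hb with hb | hb
      · exact la_height_prime h0 h p hb ha
      · rw [← hht2]; exact iInf_le_of_le ⟨p, hb⟩ le_rfl
    · rw [← hht1]; exact iInf_le_of_le ⟨p, ha⟩ le_rfl

lemma la_ne_top {R : Type*} [CommRing R] {I : Ideal R} (h : idealHeight I = 2) : I ≠ ⊤ := by
  rintro rfl
  have : IsEmpty {p : PrimeSpectrum R // (⊤ : Ideal R) ≤ p.asIdeal} :=
    ⟨fun p => p.1.2.ne_top (top_le_iff.1 p.2)⟩
  rw [idealHeight, iInf_of_empty] at h
  exact absurd h (by decide)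

end alg

section poly
variable {k : Type u} [Field k] {n : ℕ}

lemma la_mem_irr (p : MvPolynomial (Fin (n + 1)) k) :
    p ∈ Ideal.span (Set.range (X : Fin (n + 1) → MvPolynomial (Fin (n + 1)) k)) ↔
      coeff 0 p = 0 := by
  rw [← Set.image_univ, mem_ideal_span_X_image]
  constructor
  · intro h
    by_contra hc
    obtain ⟨i, -, hi⟩ := h 0 (mem_support_iff.2 hc)
    simp at hi
  · intro h m hm
    by_contra! hc
    have : m = 0 := by ext i; exact hc i trivial
    subst this
    exact mem_support_iff.1 hm h

lemma la_irr_lt :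
    Ideal.span (Set.range (X : Fin (n + 1) → MvPolynomial (Fin (n + 1)) k)) ≠ ⊤ := by
  rw [Ne, Ideal.eq_top_iff_one, la_mem_irr]
  simp

lemma la_le_irr {I : Ideal (MvPolynomial (Fin (n + 1)) k)}
    (hhom : ∀ p ∈ I, ∀ m : ℕ, homogeneousComponent m p ∈ I) (hI : I ≠ ⊤) :
    I ≤ Ideal.span (Set.range X) := by
  intro p hp
  rw [la_mem_irr]
  by_contra hc
  have := hhom p hp 0
  rw [homogeneousComponent_zero] at this
  exact hI (Ideal.eq_top_of_isUnit_mem _ this ((isUnit_iff_ne_zero.2 hc).map C))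

lemma la_smul_lt {R : Type u} [CommRing R] {I m : Ideal R} (h : I ≤ m) (hm : m ≠ ⊤) :
    m • (⊤ : Submodule R (R ⧸ I)) < ⊤ := by
  refine lt_top_iff_ne_top.2 fun e => hm ?_
  have h2 := congrArg (Submodule.comap (Submodule.mkQ I)) e
  rw [Submodule.comap_smul_top_of_surjective m _ (Submodule.mkQ_surjective _)] at h2
  simpa [h] using h2

lemma la_X_regular : ∃ rs : List (MvPolynomial (Fin (n + 1)) k), rs.length = n + 1 ∧
    (∀ r ∈ rs, r ∈ Ideal.span (Set.range X)) ∧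
    RingTheory.Sequence.IsRegular (MvPolynomial (Fin (n + 1)) k) rs := by
  refine ⟨List.ofFn X, by simp, ?_, ⟨⟨?_⟩, ?_⟩⟩
  · intro r hr
    rw [List.mem_ofFn] at hr
    exact Ideal.subset_span hr
  · intro i hi
    have hi' : i < n + 1 := by simpa using hi
    have : Ideal.ofList ((List.ofFn (X : Fin (n + 1) → MvPolynomial (Fin (n + 1)) k)).take i) =
        Ideal.span (X '' {j : Fin (n + 1) | j.1 < i}) := by
      rw [Ideal.ofList]
      congr 1
      ext r
      simp only [Set.mem_setOf_eq, List.mem_take_iff_getElem, List.getElem_ofFn, Set.mem_image,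
        List.length_ofFn]
      constructor
      · rintro ⟨j, hj, rfl⟩
        exact ⟨⟨j, by omega⟩, by simp; omega, rfl⟩
      · rintro ⟨j, hj, rfl⟩
        exact ⟨j, by omega, rfl⟩
    rw [isSMulRegular_quotient_iff_mem_of_smul_mem, this]
    simp only [smul_eq_mul, Ideal.mul_top, List.getElem_ofFn]
    intro p hp
    rw [mem_ideal_span_X_image] at hp ⊢
    intro m hm
    obtain ⟨j, hj, hjm⟩ := hp (Finsupp.single ⟨i, hi'⟩ 1 + m) (by
      rw [mem_support_iff, coeff_X_mul]; exact mem_support_iff.1 hm)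
    refine ⟨j, hj, ?_⟩
    have hne : (⟨i, hi'⟩ : Fin (n + 1)) ≠ j := by
      rintro rfl
      simp at hj
    simpa [Finsupp.single_eq_of_ne' hne] using hjm
  · have : Ideal.ofList (List.ofFn (X : Fin (n + 1) → MvPolynomial (Fin (n + 1)) k)) =
        Ideal.span (Set.range X) := by
      rw [Ideal.ofList]
      congr 1
      ext r
      exact List.mem_ofFn
    rw [this]
    simpa using la_irr_lt.symm

end poly

open CategoryTheory Abelian in
lemma la_main {k : Type u} [Field k] (n : ℕ) (hn : 2 ≤ n)
    (I₁ I₂ : Ideal (MvPolynomial (Fin (n + 1)) k))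
    (hm1 : I₁ ≤ Ideal.span (Set.range X)) (hm2 : I₂ ≤ Ideal.span (Set.range X))
    (hcm1 : quotientIsCM k n I₁ 2) (hcm2 : quotientIsCM k n I₂ 2)
    (F₁ F₂ : MvPolynomial (Fin (n + 1)) k)
    (h1 : F₁ ∈ I₁) (h2 : F₂ ∈ I₂) (h0 : F₁ ≠ 0)
    (h : ∀ a, F₁ ∣ F₂ * a → F₁ ∣ a) :
    quotientIsCM k n (Ideal.span {F₂} * I₁ + Ideal.span {F₁} * I₂) 2 := by
  set I := Ideal.span {F₂} * I₁ + Ideal.span {F₁} * I₂ with hI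
  have hle : I ≤ I₁ :=
    sup_le Ideal.mul_le_right
      (Ideal.mul_le_left.trans ((Ideal.span_singleton_le_iff_mem _).2 h1))
  let R := MvPolynomial (Fin (n + 1)) k
  let m : Ideal R := Ideal.span (Set.range X)
  let N : ModuleCat.{u} R := ModuleCat.of R (R ⧸ m)
  have hNs : Module.support R N = PrimeSpectrum.zeroLocus m := by
    rw [Module.support_eq_zeroLocus]
    congr 2
    exact Ideal.annihilator_quotient
  have hNf : Module.Finite R N := inferInstanceAs (Module.Finite R (R ⧸ m))
  have extR : ∀ i < n + 1, Subsingleton (Ext N (ModuleCat.of R R) i) := by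
    obtain ⟨rs, hl, hmem, hreg⟩ := la_X_regular (k := k) (n := n)
    have := ModuleCat.subsingleton_ext_of_exists_isRegular m N hNs.subset (ModuleCat.of R R)
      (lt_top_iff_ne_top.2 (by simpa using la_irr_lt)) rs hmem hreg
    rwa [hl] at this
  have extQ : ∀ J : Ideal R, J ≤ m → quotientIsCM k n J 2 →
      ∀ i < n - 1, Subsingleton (Ext N (ModuleCat.of R (R ⧸ J)) i) := by
    rintro J hJ ⟨rs, hl, hmem, hreg⟩
    have := ModuleCat.subsingleton_ext_of_exists_isRegular m N hNs.subset (ModuleCat.of R (R ⧸ J))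
      (la_smul_lt hJ la_irr_lt) rs hmem hreg
    rw [hl] at this
    intro i hi
    exact this i (by omega)
  have exJ : ∀ J : Ideal R, Function.Exact (Submodule.subtype J) (Submodule.mkQ J) := by
    intro J
    rw [LinearMap.exact_iff]; simp
  have extI : ∀ J : Ideal R, J ≤ m → quotientIsCM k n J 2 →
      ∀ i < n, Subsingleton (Ext N (ModuleCat.of R J) i) := by
    intro J hJ hc i hi
    exact la_ext_left N (Submodule.subtype J) (Submodule.mkQ J) (Submodule.subtype_injective J)
      (Submodule.mkQ_surjective J) (exJ J) i (extR i (by omega))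
      (fun j hj => extQ J hJ hc j (by omega))
  have extP : ∀ i < n, Subsingleton (Ext N (ModuleCat.of R (I₁ × I₂)) i) := by
    intro i hi
    exact la_ext_mid N (LinearMap.inl R I₁ I₂) (LinearMap.snd R I₁ I₂) LinearMap.inl_injective
      LinearMap.snd_surjective Function.Exact.inl_snd i
      (extI I₁ hm1 hcm1 i hi) (extI I₂ hm2 hcm2 i hi)
  let f : R →ₗ[R] (I₁ × I₂) := LinearMap.prod
    (LinearMap.toSpanSingleton R I₁ ⟨F₁, h1⟩) (LinearMap.toSpanSingleton R I₂ (-⟨F₂, h2⟩))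
  let g0 : (I₁ × I₂) →ₗ[R] R :=
    LinearMap.coprod (F₂ • Submodule.subtype I₁) (F₁ • Submodule.subtype I₂)
  have hg0 : ∀ a b, g0 (a, b) = F₂ * a.1 + F₁ * b.1 := fun a b => by simp [g0]
  have hmemI : ∀ x : R, x ∈ I ↔ ∃ p, g0 p = x := by
    intro x
    rw [hI, Submodule.add_eq_sup, Submodule.mem_sup]
    constructor
    · rintro ⟨y, hy, z, hz, rfl⟩
      obtain ⟨a, ha, rfl⟩ := Ideal.mem_span_singleton_mul.1 hy
      obtain ⟨b, hb, rfl⟩ := Ideal.mem_span_singleton_mul.1 hz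
      exact ⟨(⟨a, ha⟩, ⟨b, hb⟩), hg0 _ _⟩
    · rintro ⟨⟨a, b⟩, rfl⟩
      exact ⟨_, Ideal.mem_span_singleton_mul.2 ⟨a.1, a.2, rfl⟩, _,
        Ideal.mem_span_singleton_mul.2 ⟨b.1, b.2, rfl⟩, (hg0 _ _).symm⟩
  let g : (I₁ × I₂) →ₗ[R] I := LinearMap.codRestrict I g0 (fun p => (hmemI _).2 ⟨p, rfl⟩)
  have hf : Function.Injective f := by
    rw [injective_iff_map_eq_zero]
    intro c hc
    have := congrArg (fun z : I₁ × I₂ => z.1.1) hc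
    simpa [f, h0] using this
  have hg : Function.Surjective g := by
    rintro ⟨x, hx⟩
    obtain ⟨p, hp⟩ := (hmemI x).1 hx
    exact ⟨p, Subtype.ext hp⟩
  have hfg : Function.Exact f g := by
    rintro ⟨a, b⟩
    constructor
    · intro hz
      have hz' : F₂ * a.1 + F₁ * b.1 = 0 := by
        rw [← hg0]; exact congrArg Subtype.val hz
      obtain ⟨c, hc1, hc2⟩ := la_ker h0 h _ _ hz'
      refine ⟨c, Prod.ext (Subtype.ext ?_) (Subtype.ext ?_)⟩
      · simp [f, hc1, mul_comm]
      · simp [f, hc2, mul_comm]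
    · rintro ⟨c, hc⟩
      rw [← hc]
      apply Subtype.ext
      change F₂ * (c * F₁) + F₁ * (c * (-F₂)) = 0
      ring
  have extI' : ∀ i < n, Subsingleton (Ext N (ModuleCat.of R I) i) := by
    intro i hi
    exact la_ext_right N f g hf hg hfg i (extP i hi) (extR (i + 1) (by omega))
  obtain ⟨rs, hl, hmem, hreg⟩ := ModuleCat.exists_isRegular_of_exists_subsingleton_ext m (n - 1)
    (ModuleCat.of R (R ⧸ I)) (la_smul_lt (hle.trans hm1) la_irr_lt) N hNs
    (fun i hi => la_ext_right N (Submodule.subtype I) (Submodule.mkQ I)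
      (Submodule.subtype_injective I) (Submodule.mkQ_surjective I) (exJ I) i (extR i (by omega))
      (extI' (i + 1) (by omega)))
  exact ⟨rs, by omega, hmem, hreg⟩

/-- Liaison addition of two ACM codimension-two homogeneous ideals is again of height 2
with Cohen-Macaulay quotient. -/
theorem liaison_addition_is_CM
    {k : Type*} [Field k] (n : ℕ) (hn : 2 ≤ n)
    (I₁ I₂ : Ideal (MvPolynomial (Fin (n + 1)) k))
    (hhom1 : ∀ p ∈ I₁, ∀ m : ℕ, homogeneousComponent m p ∈ I₁)
    (hhom2 : ∀ p ∈ I₂, ∀ m : ℕ, homogeneousComponent m p ∈ I₂)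
    (hht1 : idealHeight I₁ = 2) (hht2 : idealHeight I₂ = 2)
    (hcm1 : quotientIsCM k n I₁ 2) (hcm2 : quotientIsCM k n I₂ 2)
    (F₁ F₂ : MvPolynomial (Fin (n + 1)) k) (d₁ d₂ : ℕ)
    (h1 : F₁ ∈ I₁) (h2 : F₂ ∈ I₂)
    (hd1 : F₁.IsHomogeneous d₁) (hd2 : F₂.IsHomogeneous d₂)
    (hreg : RingTheory.Sequence.IsRegular (MvPolynomial (Fin (n + 1)) k) [F₁, F₂]) :
    idealHeight (Ideal.span {F₂} * I₁ + Ideal.span {F₁} * I₂) = 2 ∧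
      quotientIsCM k n (Ideal.span {F₂} * I₁ + Ideal.span {F₁} * I₂) 2 := by
  obtain ⟨h0, h⟩ := la_reg hreg
  exact ⟨la_height h0 h h1 hht1 hht2, la_main n hn I₁ I₂ (la_le_irr hhom1 (la_ne_top hht1))
    (la_le_irr hhom2 (la_ne_top hht2)) hcm1 hcm2 F₁ F₂ h1 h2 h0 h⟩
end

section
/- Let R = k[x_0,...,x_n] with n ≥ 2 and let I_1 be a homogeneous ideal of height 2 such that R/I_1 is Cohen-Macaulay. Let F_1 ∈ I_1 and F_2 ∈ R be homogeneous forms forming a regular sequence. Then the basic double link ideal I = F_2 I_1 + (F_1) has height 2 and R/I is Cohen-Macaulay. -/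
open MvPolynomial

section BDL

open CategoryTheory Abelian RingTheory.Sequence

universe u

/-- Vanishing of Ext below `n`. -/
def ExtVanish {R : Type u} [CommRing R] (m : Ideal R) (n : ℕ) (I : Ideal R) : Prop :=
  ∀ i < n, Subsingleton (Ext (ModuleCat.of R (R ⧸ m)) (ModuleCat.of R (R ⧸ I)) i)

theorem bdl_smul_lt {R : Type u} [CommRing R] (m I : Ideal R) (hm : m ≠ ⊤) (hI : I ≤ m) :
    m • (⊤ : Submodule R (R ⧸ I)) < ⊤ := by
  rw [lt_top_iff_ne_top]
  intro h
  have h1 : m • (⊤ : Submodule R (R ⧸ I)) ≤ LinearMap.ker (Submodule.factor hI) := by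
    rw [Submodule.smul_le]
    intro r hr x _
    obtain ⟨y, rfl⟩ := Submodule.mkQ_surjective _ x
    rw [← map_smul, LinearMap.mem_ker]
    change (Submodule.Quotient.mk (r • y) : R ⧸ m) = 0
    rw [Submodule.Quotient.mk_eq_zero]
    exact m.mul_mem_right _ hr
  rw [h] at h1
  have h2 := h1 (Submodule.mem_top (x := Submodule.mkQ I 1))
  rw [LinearMap.mem_ker] at h2
  change (Submodule.Quotient.mk 1 : R ⧸ m) = 0 at h2
  rw [Submodule.Quotient.mk_eq_zero] at h2
  exact hm ((Ideal.eq_top_iff_one _).2 h2)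

theorem bdl_rees {R : Type u} [CommRing R] [IsNoetherianRing R] (m I : Ideal R)
    (hm : m ≠ ⊤) (hI : I ≤ m) (n : ℕ) :
    ExtVanish m n I ↔ ∃ rs : List R, rs.length = n ∧ (∀ r ∈ rs, r ∈ m) ∧
      IsRegular (R ⧸ I) rs := by
  have hs : Module.support R (R ⧸ m) = PrimeSpectrum.zeroLocus m := by
    rw [Module.support_eq_zeroLocus, Ideal.annihilator_quotient]
  constructor
  · intro h
    exact ModuleCat.exists_isRegular_of_exists_subsingleton_ext m n (ModuleCat.of R (R ⧸ I))
      (bdl_smul_lt m I hm hI) (ModuleCat.of R (R ⧸ m)) hs h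
  · rintro ⟨rs, rfl, h1, h2⟩
    exact ModuleCat.subsingleton_ext_of_exists_isRegular m (ModuleCat.of R (R ⧸ m)) hs.subset
      (ModuleCat.of R (R ⧸ I)) (bdl_smul_lt m I hm hI) rs h1 h2

theorem bdl_ses {R : Type u} [CommRing R] (A B : Ideal R) (f : R)
    (h : ∀ x, f * x ∈ B ↔ x ∈ A) :
    ∃ S : ShortComplex (ModuleCat.{u} R), S.ShortExact ∧ S.X₁ = ModuleCat.of R (R ⧸ A) ∧
      S.X₂ = ModuleCat.of R (R ⧸ B) ∧ S.X₃ = ModuleCat.of R (R ⧸ (B ⊔ Ideal.span {f})) := by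
  let φ : (R ⧸ A) →ₗ[R] (R ⧸ B) := Submodule.mapQ A B (LinearMap.lsmul R R f)
    (fun x hx => by simpa using (h x).2 hx)
  let ψ : (R ⧸ B) →ₗ[R] (R ⧸ (B ⊔ Ideal.span {f})) := Submodule.factor le_sup_left
  have hφ : Function.Injective φ := by
    rw [← LinearMap.ker_eq_bot, LinearMap.ker_eq_bot']
    intro x hx
    obtain ⟨y, rfl⟩ := Submodule.mkQ_surjective _ x
    simp only [φ, Submodule.mkQ_apply, Submodule.mapQ_apply] at hx ⊢
    rw [Submodule.Quotient.mk_eq_zero] at hx ⊢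
    exact (h y).1 (by simpa using hx)
  have hψ : Function.Surjective ψ := Submodule.factor_surjective _
  have hex : Function.Exact φ ψ := by
    intro x
    obtain ⟨y, rfl⟩ := Submodule.mkQ_surjective _ x
    change (Submodule.Quotient.mk y : R ⧸ (B ⊔ Ideal.span {f})) = 0 ↔
      (Submodule.Quotient.mk y : R ⧸ B) ∈ Set.range φ
    rw [Submodule.Quotient.mk_eq_zero, Submodule.mem_sup]
    constructor
    · rintro ⟨b, hb, c, hc, rfl⟩
      obtain ⟨z, rfl⟩ := Ideal.mem_span_singleton'.1 hc
      refine ⟨Submodule.Quotient.mk z, ?_⟩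
      simp only [φ, Submodule.mapQ_apply]
      rw [Submodule.Quotient.eq]
      have : f * z - (b + z * f) = -b := by ring
      simpa [this] using hb
    · rintro ⟨z, hz⟩
      obtain ⟨z, rfl⟩ := Submodule.mkQ_surjective _ z
      simp only [φ, Submodule.mkQ_apply, Submodule.mapQ_apply] at hz
      rw [Submodule.Quotient.eq] at hz
      refine ⟨y - f * z, ?_, z * f, Ideal.mem_span_singleton'.2 ⟨z, rfl⟩, by ring⟩
      rw [← neg_sub]
      exact B.neg_mem (by simpa using hz)
  refine ⟨ModuleCat.shortComplexOfCompEqZero φ ψ hex.linearMap_comp_eq_zero, ?_, rfl, rfl, rfl⟩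
  exact { exact := ModuleCat.shortComplex_exact _ hex
          mono_f := (ModuleCat.mono_iff_injective _).2 hφ
          epi_g := (ModuleCat.epi_iff_surjective _).2 hψ }

theorem bdl_mid {R : Type u} [CommRing R] (m A B : Ideal R) (f : R) (n : ℕ)
    (h : ∀ x, f * x ∈ B ↔ x ∈ A) (hA : ExtVanish m n A)
    (hC : ExtVanish m n (B ⊔ Ideal.span {f})) : ExtVanish m n B := by
  obtain ⟨S, hS, e1, e2, e3⟩ := bdl_ses A B f h
  intro i hi
  have hA := hA i hi
  have hC := hC i hi
  rw [← e1] at hA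
  rw [← e3] at hC
  rw [← e2]
  exact AddCommGrpCat.subsingleton_of_isZero <| ShortComplex.Exact.isZero_of_both_zeros
    (Ext.covariant_sequence_exact₂' _ hS i)
    ((AddCommGrpCat.isZero_of_iff_subsingleton.mpr hA).eq_zero_of_src _)
    ((AddCommGrpCat.isZero_of_iff_subsingleton.mpr hC).eq_zero_of_tgt _)

theorem bdl_right {R : Type u} [CommRing R] (m B : Ideal R) (f : R) (n : ℕ)
    (h : ∀ x, f * x ∈ B ↔ x ∈ B) (hB : ExtVanish m (n + 1) B) :
    ExtVanish m n (B ⊔ Ideal.span {f}) := by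
  obtain ⟨S, hS, e1, e2, e3⟩ := bdl_ses B B f h
  intro i hi
  have h2 := hB i (by omega)
  have h1 := hB (i + 1) (by omega)
  rw [← e1] at h1
  rw [← e2] at h2
  rw [← e3]
  exact AddCommGrpCat.subsingleton_of_isZero <| ShortComplex.Exact.isZero_of_both_zeros
    (Ext.covariant_sequence_exact₃' _ hS i (i + 1) rfl)
    ((AddCommGrpCat.isZero_of_iff_subsingleton.mpr h2).eq_zero_of_src _)
    ((AddCommGrpCat.isZero_of_iff_subsingleton.mpr h1).eq_zero_of_tgt _)

theorem bdl_X_reg {k σ : Type*} [Field k] (s : Set σ) (i : σ) (hi : i ∉ s)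
    (p : MvPolynomial σ k) (h : X i * p ∈ Ideal.span (X '' s : Set (MvPolynomial σ k))) :
    p ∈ Ideal.span (X '' s : Set (MvPolynomial σ k)) := by
  classical
  rw [mem_ideal_span_X_image] at h ⊢
  intro d hd
  obtain ⟨j, hj, hne⟩ := h (Finsupp.single i 1 + d) (by
    rw [mem_support_iff] at hd ⊢
    rwa [coeff_X_mul])
  refine ⟨j, hj, ?_⟩
  have : i ≠ j := fun e => hi (e ▸ hj)
  simpa [Finsupp.single_apply, this] using hne

theorem bdl_m_ne_top {k σ : Type*} [Field k] :
    (Ideal.span (Set.range X) : Ideal (MvPolynomial σ k)) ≠ ⊤ := by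
  intro h
  have h1 := (Ideal.eq_top_iff_one _).1 h
  have h2 : (Ideal.span (Set.range X) : Ideal (MvPolynomial σ k)) ≤
      RingHom.ker (constantCoeff (σ := σ) (R := k)) := by
    rw [Ideal.span_le]
    rintro _ ⟨i, rfl⟩
    simp [RingHom.mem_ker]
  have := h2 h1
  simp [RingHom.mem_ker] at this

theorem bdl_mem_m {k σ : Type*} [Field k] (F : MvPolynomial σ k) (d : ℕ)
    (hF : F.IsHomogeneous d) (hu : ¬ IsUnit F) :
    F ∈ (Ideal.span (Set.range X) : Ideal (MvPolynomial σ k)) := by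
  classical
  rw [← Set.image_univ, mem_ideal_span_X_image]
  intro e he
  by_contra hcon
  push Not at hcon
  have he0 : e = 0 := by
    ext i
    exact hcon i (Set.mem_univ i)
  subst he0
  have hd : d = 0 := by
    have := hF (mem_support_iff.1 he)
    simpa using this.symm
  subst hd
  apply hu
  have h3 := (totalDegree_eq_zero_iff_eq_C (p := F)).1 (Nat.le_zero.1 hF.totalDegree_le)
  rw [h3]
  exact (isUnit_iff_ne_zero.2 (mem_support_iff.1 he)).map C

theorem bdl_poly_depth {k : Type u} [Field k] (n : ℕ) :
    ExtVanish (Ideal.span (Set.range X) : Ideal (MvPolynomial (Fin n) k)) n ⊥ := by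
  rw [bdl_rees _ _ bdl_m_ne_top bot_le]
  have hmem : ∀ r ∈ (List.finRange n).map (X : Fin n → MvPolynomial (Fin n) k),
      r ∈ (Ideal.span (Set.range X) : Ideal (MvPolynomial (Fin n) k)) := by
    intro r hr
    obtain ⟨i, _, rfl⟩ := List.mem_map.1 hr
    exact Ideal.subset_span ⟨i, rfl⟩
  refine ⟨(List.finRange n).map X, by simp, hmem, ?_⟩
  refine ⟨?_, ?_⟩
  · rw [LinearEquiv.isWeaklyRegular_congr (Submodule.quotEquivOfEqBot _ rfl), isWeaklyRegular_iff]
    intro i hi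
    rw [isSMulRegular_quotient_iff_mem_of_smul_mem]
    have hI : Ideal.ofList (List.take i ((List.finRange n).map
        (X : Fin n → MvPolynomial (Fin n) k))) • (⊤ : Submodule _ (MvPolynomial (Fin n) k)) =
        Ideal.span (X '' {j : Fin n | (j : ℕ) < i}) := by
      rw [smul_eq_mul, Ideal.mul_top, Ideal.ofList]
      congr 1
      ext r
      rw [← List.map_take]
      simp only [Set.mem_ofPred_eq, List.mem_map, Set.mem_image]
      apply exists_congr
      intro j
      apply and_congr_left
      intro _
      rw [List.mem_take_iff_getElem]
      constructor
      · rintro ⟨l, hl, rfl⟩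
        simp at hl ⊢
        omega
      · intro hj
        exact ⟨j, by simpa using hj, by simp⟩
    rw [hI]
    intro x hx
    refine bdl_X_reg _ ⟨i, by simpa using hi⟩ (by simp) x ?_
    simpa using hx
  · intro h
    refine (bdl_smul_lt _ ⊥ (bdl_m_ne_top (k := k) (σ := Fin n)) bot_le).ne ?_
    rw [eq_top_iff]
    refine h.le.trans (Submodule.smul_mono_left ?_)
    rw [Ideal.ofList, Ideal.span_le]
    exact hmem

theorem bdl_height {R : Type u} [CommRing R] [IsDomain R] (F G : R) (hF : F ≠ 0)
    (hG : ∀ x, G * x ∈ Ideal.span {F} → x ∈ Ideal.span {F}) (p : PrimeSpectrum R)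
    (hpF : F ∈ p.asIdeal) (hpG : G ∈ p.asIdeal) : 2 ≤ Order.height p := by
  obtain ⟨q, hq, hqp⟩ := Ideal.exists_minimalPrimes_le (I := Ideal.span {F}) (J := p.asIdeal)
    (by simpa [Ideal.span_le] using hpF)
  have hGq : G ∉ q := by
    intro h
    obtain ⟨y, hy, hy'⟩ := Ideal.exists_mul_mem_of_mem_minimalPrimes hq h
    exact hy (hG y hy')
  let Q : PrimeSpectrum R := ⟨q, hq.1.1⟩
  let Z : PrimeSpectrum R := ⟨⊥, Ideal.isPrime_bot⟩
  have h1 : Z < Q := by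
    refine lt_of_le_of_ne (show (⊥ : Ideal R) ≤ q from bot_le) ?_
    intro e
    have : (⊥ : Ideal R) = q := congrArg PrimeSpectrum.asIdeal e
    have hFq : F ∈ q := hq.1.2 (Ideal.mem_span_singleton_self F)
    rw [← this] at hFq
    exact hF (by simpa using hFq)
  have h2 : Q < p := by
    refine lt_of_le_of_ne hqp ?_
    intro e
    apply hGq
    rw [← e] at hpG
    exact hpG
  have a := Order.height_add_one_le h1
  have b := Order.height_add_one_le h2
  calc (2 : ℕ∞) = 0 + 1 + 1 := by norm_num
    _ ≤ Order.height Z + 1 + 1 := by gcongr; exact bot_le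
    _ ≤ Order.height Q + 1 := by gcongr
    _ ≤ _ := b

end BDL

/-- A basic double link of an ACM codimension-two homogeneous ideal is again of height 2
with Cohen-Macaulay quotient. -/
theorem basic_double_link_is_CM
    {k : Type*} [Field k] (n : ℕ) (hn : 2 ≤ n)
    (I₁ : Ideal (MvPolynomial (Fin (n + 1)) k))
    (hhom : ∀ p ∈ I₁, ∀ m : ℕ, homogeneousComponent m p ∈ I₁)
    (hht : idealHeight I₁ = 2) (hcm : quotientIsCM k n I₁ 2)
    (F₁ F₂ : MvPolynomial (Fin (n + 1)) k) (d₁ d₂ : ℕ)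
    (h1 : F₁ ∈ I₁) (hd1 : F₁.IsHomogeneous d₁) (hd2 : F₂.IsHomogeneous d₂)
    (hreg : RingTheory.Sequence.IsRegular (MvPolynomial (Fin (n + 1)) k) [F₁, F₂]) :
    idealHeight (Ideal.span {F₂} * I₁ + Ideal.span {F₁}) = 2 ∧
      quotientIsCM k n (Ideal.span {F₂} * I₁ + Ideal.span {F₁}) 2 := by
  obtain ⟨hw, hne⟩ := hreg
  have hne' : Ideal.span {F₁} ⊔ Ideal.span {F₂} ≠ ⊤ := by
    intro h
    apply hne
    simp [h]
  have hF1 : ¬ IsUnit F₁ := by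
    intro h
    apply hne'
    rw [Ideal.span_singleton_eq_top.2 h, top_sup_eq]
  have hF2 : ¬ IsUnit F₂ := by
    intro h
    apply hne'
    rw [Ideal.span_singleton_eq_top.2 h, sup_top_eq]
  have m1 := bdl_mem_m F₁ d₁ hd1 hF1
  have m2 := bdl_mem_m F₂ d₂ hd2 hF2
  have r1 : F₁ ≠ 0 := by
    have := (RingTheory.Sequence.isWeaklyRegular_cons_iff _ _ _).1 hw
    rintro rfl
    have h3 := this.1 (a₁ := (1 : MvPolynomial (Fin (n + 1)) k)) (a₂ := 0) (by simp)
    exact one_ne_zero h3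
  have r2 : ∀ x, F₂ * x ∈ Ideal.span {F₁} → x ∈ Ideal.span {F₁} := by
    have := hw.regular_mod_prev 1 (by simp)
    rw [isSMulRegular_quotient_iff_mem_of_smul_mem] at this
    simpa [Ideal.ofList_singleton] using this
  set I := Ideal.span {F₂} * I₁ + Ideal.span {F₁} with hI
  have hII1 : I ≤ I₁ := by
    rw [hI]
    exact sup_le Ideal.mul_le_right (by simpa [Ideal.span_le] using h1)
  have hIF : I ⊔ Ideal.span {F₂} = Ideal.span {F₁} ⊔ Ideal.span {F₂} := by
    rw [hI, Submodule.add_eq_sup]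
    apply le_antisymm
    · exact sup_le (sup_le (Ideal.mul_le_right.trans' (by rw [mul_comm]) |>.trans le_sup_right)
        le_sup_left) le_sup_right
    · exact sup_le_sup_right le_sup_right _
  have hm : Ideal.span {F₁} ⊔ Ideal.span {F₂} ≤
      (Ideal.span (Set.range X) : Ideal (MvPolynomial (Fin (n + 1)) k)) :=
    sup_le (by simpa [Ideal.span_le] using m1) (by simpa [Ideal.span_le] using m2)
  have hIm : I ≤ Ideal.span (Set.range X) := (le_sup_left.trans hIF.le).trans hm
  have hcolon : ∀ x, F₂ * x ∈ I ↔ x ∈ I₁ := by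
    intro x
    constructor
    · intro hx
      obtain ⟨a, ha, b, hb, hab⟩ := Submodule.mem_sup.1 hx
      obtain ⟨z, hz, rfl⟩ := Ideal.mem_span_singleton_mul.1 ha
      have : x - z ∈ Ideal.span {F₁} := r2 _ (by
        have : F₂ * (x - z) = b := by rw [mul_sub, ← hab]; ring
        rwa [this])
      have h5 : x - z ∈ I₁ := (show Ideal.span {F₁} ≤ I₁ by
        simpa [Ideal.span_le] using h1) this
      simpa using I₁.add_mem h5 hz
    · intro hx
      exact Submodule.mem_sup_left (Ideal.mul_mem_mul (Ideal.mem_span_singleton_self _) hx)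
  constructor
  · apply le_antisymm
    · rw [← hht]
      refine le_iInf fun p => ?_
      exact iInf_le_of_le ⟨p.1, hII1.trans p.2⟩ le_rfl
    · refine le_iInf fun p => ?_
      obtain ⟨p, hp⟩ := p
      have hpF : F₁ ∈ p.asIdeal :=
        hp (Submodule.mem_sup_right (Ideal.mem_span_singleton_self F₁))
      have hmul : Ideal.span {F₂} * I₁ ≤ p.asIdeal := le_trans le_sup_left hp
      rcases p.2.mul_le.1 hmul with h | h
      · exact bdl_height F₁ F₂ r1 r2 p hpF (h (Ideal.mem_span_singleton_self F₂))
      · rw [← hht]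
        exact iInf_le_of_le ⟨p, h⟩ le_rfl
  · have hI1m : I₁ ≤ Ideal.span (Set.range X) := by
      intro p hp
      rw [← Set.image_univ, mem_ideal_span_X_image]
      intro e he
      by_contra hcon
      push Not at hcon
      have he0 : e = 0 := by
        ext i
        exact hcon i (Set.mem_univ i)
      subst he0
      have h6 := hhom p hp 0
      rw [homogeneousComponent_zero] at h6
      have h7 : I₁ = ⊤ := Ideal.eq_top_of_isUnit_mem _ h6
        ((isUnit_iff_ne_zero.2 (mem_support_iff.1 he)).map C)
      obtain ⟨rs, _, _, hrs⟩ := hcm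
      have h8 := hrs.nontrivial
      rw [Ideal.Quotient.nontrivial_iff] at h8
      exact h8 h7
    have e1 := (bdl_rees _ I₁ bdl_m_ne_top hI1m ((n + 1) - 2)).2 hcm
    refine (bdl_rees _ I bdl_m_ne_top hIm ((n + 1) - 2)).1 ?_
    refine bdl_mid _ I₁ I F₂ _ hcolon e1 ?_
    rw [hIF]
    have e2 := bdl_poly_depth (k := k) (n + 1)
    have e3 := bdl_right _ ⊥ F₁ n (by simp [r1]) e2
    rw [bot_sup_eq] at e3
    replace e3 : ExtVanish (Ideal.span (Set.range X)) ((n + 1 - 2) + 1) (Ideal.span {F₁}) :=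
      fun i hi => e3 i (by omega)
    exact bdl_right _ _ F₂ _ (fun x => ⟨r2 x, fun h => Ideal.mul_mem_left _ _ h⟩) e3
end
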